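/- There exists a constant C > 0, independent of ε and n, such that for every ε ∈ (0,1/2), every n ≥ 1 and every k_{1:n} = (k₁,…,k_n) ∈ (ℤ²₀)^n, one has |P^ε(k_{1:n}) − G(L^ε(|k_{1:n}|²/2))| ≤ C λ_ε², where P^ε(k_{1:n}) := (λ_ε²/π²) Σ_{ℓ,m ∈ ℤ²₀, ℓ+m=k₁} J^ε_{ℓ,m} / (Γ̃ + Γ̃^w G(L^ε(Γ̃))), with Γ̃ := (|ℓ|² + |m|² + Σ_{i=2}^n |k_i|²)/2 and Γ̃^w := ((w·ℓ)² + (w·m)² + Σ_{i=2}^n (w·k_i)²)/2. -/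

import Mathlib

open scoped BigOperators
open scoped Classical

noncomputable section

namespace SBE

/-- Lattice points of `ℤ^d`. -/
abbrev ZLat (d : ℕ) := Fin d → ℤ

/-- Kernels of the `n`-th chaos: functions on `n`-tuples of lattice points. -/
abbrev Chaos (d n : ℕ) := (Fin n → ZLat d) → ℂ

/-- Squared Euclidean norm of a lattice point. -/
def nsq {d : ℕ} (k : ZLat d) : ℝ := ∑ i, ((k i : ℝ))^2

/-- Euclidean norm of a lattice point. -/
def eN {d : ℕ} (k : ZLat d) : ℝ := Real.sqrt (nsq k)

/-- Supremum norm of a lattice point. -/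
def sN {d : ℕ} (k : ZLat d) : ℝ := ((Finset.univ.sup fun i => (k i).natAbs : ℕ) : ℝ)

/-- The norm used in the Fourier cutoff: Euclidean if `d = 2`, supremum otherwise. -/
def cutNorm (d : ℕ) (k : ZLat d) : ℝ := if d = 2 then eN k else sN k

/-- `w · k`. -/
def dotw {d : ℕ} (w : Fin d → ℝ) (k : ZLat d) : ℝ := ∑ i, w i * (k i : ℝ)

/-- `|k_{1:n}|² = Σ_i |k_i|²`. -/
def wSq {d n : ℕ} (k : Fin n → ZLat d) : ℝ := ∑ a, nsq (k a)

/-- The coupling constant `λ_ε`. -/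
def lam (d : ℕ) (ε : ℝ) : ℝ :=
  if d = 2 then (Real.sqrt (Real.log (1 / ε^2)))⁻¹ else ε ^ ((d:ℝ)/2 - 1)

/-- The Fourier cutoff indicator `J^ε_{ℓ,m}`. -/
def Jind (d : ℕ) (ε : ℝ) (l m : ZLat d) : ℝ :=
  if 0 < ε * cutNorm d l ∧ ε * cutNorm d l ≤ 1 ∧
     0 < ε * cutNorm d m ∧ ε * cutNorm d m ≤ 1 ∧
     0 < ε * cutNorm d (l + m) ∧ ε * cutNorm d (l + m) ≤ 1 then 1 else 0

/-- Symmetry of a kernel under permutation of its arguments. -/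
def Symm {d n : ℕ} (f : Chaos d n) : Prop :=
  ∀ (σ : Equiv.Perm (Fin n)) (k : Fin n → ZLat d), f (k ∘ σ) = f k

/-- A kernel vanishes whenever one of its arguments is the zero frequency
(i.e. it is really a function on `(ℤ^d_0)^n`). -/
def SuppOk {d n : ℕ} (f : Chaos d n) : Prop :=
  ∀ k : Fin n → ZLat d, (∃ a, k a = 0) → f k = 0

/-- Summand of `‖(-L₀)^s f‖²`. -/
def sobTerm {d n : ℕ} (s : ℝ) (f : Chaos d n) (k : Fin n → ZLat d) : ℝ :=
  (wSq k / 2) ^ (2*s) * ‖f k‖^2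

/-- `‖(-L₀)^s f‖² = n! Σ_k (|k_{1:n}|²/2)^{2s} |f(k)|²`. -/
def sobSq {d n : ℕ} (s : ℝ) (f : Chaos d n) : ℝ := (n.factorial : ℝ) * ∑' k, sobTerm s f k

/-- Remove the entries `i < j` from an `(n+2)`-tuple (order preservingly). -/
def remove2 {X : Type*} {n : ℕ} (k : Fin (n+2) → X) (i j : Fin (n+2)) (h : i < j) :
    Fin n → X :=
  fun a => k (j.succAbove ((Fin.castLT i
    (Nat.lt_of_lt_of_le (Fin.lt_def.mp h) (Nat.lt_succ_iff.mp j.isLt))).succAbove a))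

/-- The operator `A⁺_ε : ΓL²_{n+1} → ΓL²_{n+2}`. -/
def Aplus (d : ℕ) (w : Fin d → ℝ) (ε : ℝ) {n : ℕ} (f : Chaos d (n+1)) : Chaos d (n+2) :=
  fun k => -(2 * Complex.I / (((2*Real.pi) ^ ((d:ℝ)/2) : ℝ) : ℂ)) *
      ((lam d ε / ((n:ℝ)+2) : ℝ) : ℂ) *
    ∑ i : Fin (n+2), ∑ j : Fin (n+2),
      if h : i < j then
        ((dotw w (k i + k j) : ℝ) : ℂ) * ((Jind d ε (k i) (k j) : ℝ) : ℂ) *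
          f (Fin.cons (k i + k j) (remove2 k i j h))
      else 0

/-- The operator `A⁻_ε : ΓL²_{n+2} → ΓL²_{n+1}`. -/
def Aminus (d : ℕ) (w : Fin d → ℝ) (ε : ℝ) {n : ℕ} (f : Chaos d (n+2)) : Chaos d (n+1) :=
  fun k => (2 * Complex.I / (((2*Real.pi) ^ ((d:ℝ)/2) : ℝ) : ℂ)) *
      ((((n:ℝ)+2) * lam d ε : ℝ) : ℂ) *
    ∑ j : Fin (n+1), ((dotw w (k j) : ℝ) : ℂ) *
      ∑' l : ZLat d, ((Jind d ε l (k j - l) : ℝ) : ℂ) *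
        f (Fin.cons l (Fin.cons (k j - l) (fun a => k (j.succAbove a))))

/-- `L^ε(x) = λ_ε² log(1 + 1/(ε²x))`. -/
def Leps (ε x : ℝ) : ℝ := (lam 2 ε)^2 * Real.log (1 + 1/(ε^2 * x))

/-- `G(x) = c⁻¹ [(3cx/(2π) + 1)^{2/3} − 1]` (with `c = |w|²`). -/
def Gfun (c x : ℝ) : ℝ := c⁻¹ * ((3*c*x/(2*Real.pi) + 1) ^ ((2:ℝ)/3) - 1)

/-- `|w|²`. -/
def wnSq {d : ℕ} (w : Fin d → ℝ) : ℝ := ∑ i, (w i)^2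

/-- `(w·k)²_{1:n} = Σ_i (w·k_i)²`. -/
def wdotSq {d n : ℕ} (w : Fin d → ℝ) (k : Fin n → ZLat d) : ℝ := ∑ a, (dotw w (k a))^2

/-- Fourier multiplier of `S^ε = (−L₀ − L₀^w G^ε)⁻¹`. -/
def sigma' {n : ℕ} (w : Fin 2 → ℝ) (ε : ℝ) (k : Fin n → ZLat 2) : ℝ :=
  2 / (wSq k + wdotSq w k * Gfun (wnSq w) (Leps ε (wSq k / 2)))

/-- The operator `S^ε` acting diagonally on a kernel. -/
def SepsA (w : Fin 2 → ℝ) (ε : ℝ) {n : ℕ} (g : Chaos 2 n) : Chaos 2 n :=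
  fun k => ((sigma' w ε k : ℝ) : ℂ) * g k

/-- `Γ̃ = (|ℓ|² + |k₁−ℓ|² + |k_{2:n}|²)/2`. -/
def GammaT {n : ℕ} (k : Fin (n+1) → ZLat 2) (l : ZLat 2) : ℝ :=
  (nsq l + nsq (k 0 - l) + ∑ a : Fin n, nsq (k a.succ)) / 2

/-- `Γ̃^w = ((w·ℓ)² + (w·(k₁−ℓ))² + Σ_{i≥2}(w·k_i)²)/2`. -/
def GammaTw {n : ℕ} (w : Fin 2 → ℝ) (k : Fin (n+1) → ZLat 2) (l : ZLat 2) : ℝ :=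
  ((dotw w l)^2 + (dotw w (k 0 - l))^2 + ∑ a : Fin n, (dotw w (k a.succ))^2) / 2

/-- `P^ε(k_{1:n}) = (λ_ε²/π²) Σ_{ℓ+m=k₁} J^ε_{ℓ,m} / (Γ̃ + Γ̃^w G(L^ε(Γ̃)))`. -/
def Peps (w : Fin 2 → ℝ) (ε : ℝ) {n : ℕ} (k : Fin (n+1) → ZLat 2) : ℝ :=
  (lam 2 ε)^2 / Real.pi^2 * ∑' l : ZLat 2,
    Jind 2 ε l (k 0 - l) /
      (GammaT k l + GammaTw w k l * Gfun (wnSq w) (Leps ε (GammaT k l)))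

/-!
Centred at `k₁ / 2`, the sum over `ℓ + m = k₁` is a Riemann sum over the plane. In the continuum
kernel replacing its summand, the angular integral at radius `r` equals
`2π / √(1 + |w|² G(L^ε(z)))` with `z = r² + |k_{1:n}|² / 2`. Since `G` solves
`G' = 1 / (π √(1 + |w|² G))` and `G 0 = 0`, what remains of the radial integrand is the exact
derivative of `-(π² / λ_ε²) G(L^ε(z))`, so the integral is `π² / λ_ε²` times
`G(L^ε(|k_{1:n}|² / 2))`. The pointwise distance between summand and kernel is controlled by two
bumps whose mass depends neither on `ε` nor on `k`: one of width `|k_{1:n}|`, paying for the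
discretisation, and one of width `1 / ε`, paying for the cutoff. The prefactor `λ_ε² / π²` turns
this bounded error into `O(λ_ε²)`.
-/

section Generalities

open MeasureTheory Set
open scoped Real

/-! ### Comparing lattice sums with integrals -/

lemma measurePreserving_floor (ι : Type*) [Fintype ι] :
    MeasurePreserving (fun (u : ι → ℝ) i ↦ ⌊u i⌋) volume Measure.count := by
  have hmeas : Measurable fun (u : ι → ℝ) i ↦ ⌊u i⌋ := by fun_prop
  refine ⟨hmeas, Measure.ext_of_singleton fun l ↦ ?_⟩
  have hcell : (fun (u : ι → ℝ) i ↦ ⌊u i⌋) ⁻¹' {l} =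
      univ.pi fun i ↦ Ico (l i : ℝ) (l i + 1) := by
    ext u
    simp only [mem_preimage, mem_singleton_iff, Set.mem_pi, mem_univ, true_imp_iff, mem_Ico,
      funext_iff, Int.floor_eq_iff]
  rw [Measure.map_apply hmeas (measurableSet_singleton l), hcell, Real.volume_pi_Ico]
  simp

lemma abs_tsum_sub_integral_le {α β : Type*} [MeasurableSpace α] [MeasurableSpace β]
    [Countable β] [MeasurableSingletonClass β] {μ : Measure α} {T : α → β}
    (hT : MeasurePreserving T μ Measure.count) {φ : β → ℝ} {F E : α → ℝ}
    (hF : Integrable F μ) (hE : Integrable E μ) (h : ∀ u, |φ (T u) - F u| ≤ E u) :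
    |∑' l, φ l - ∫ u, F u ∂μ| ≤ ∫ u, E u ∂μ := by
  have hφ : AEStronglyMeasurable φ Measure.count :=
    (measurable_of_countable φ).aestronglyMeasurable
  have hφT : Integrable (fun u ↦ φ (T u)) μ := by
    have hdiff : Integrable (fun u ↦ φ (T u) - F u) μ :=
      hE.mono' ((hφ.comp_measurePreserving hT).sub hF.aestronglyMeasurable) (.of_forall h)
    exact (hdiff.add hF).congr (.of_forall fun u ↦ sub_add_cancel _ _)
  have hsum : ∑' l, φ l = ∫ u, φ (T u) ∂μ := by
    rw [← integral_map hT.aemeasurable (by rwa [hT.map_eq]), hT.map_eq,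
      integral_countable ((hT.integrable_comp hφ).1 hφT)]
    simp
  rw [hsum, ← integral_sub hφT hF]
  exact norm_integral_le_of_norm_le (f := fun u ↦ φ (T u) - F u) hE (.of_forall h)

/-! ### Bumps of fixed mass -/

/-- The bump `(1 + |x|²)^{-r/2}` rescaled to width `δ⁻¹` with its mass preserved; errors are
measured by it because its integral does not depend on `δ`. -/
def bump {E : Type*} [NormedAddCommGroup E] [NormedSpace ℝ E] (r δ : ℝ) (x : E) : ℝ :=
  δ ^ Module.finrank ℝ E * (1 + ‖δ • x‖ ^ 2) ^ (-r / 2)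

section Bump

variable {E : Type*} [NormedAddCommGroup E] [NormedSpace ℝ E] {r δ : ℝ}

lemma bump_nonneg (hδ : 0 ≤ δ) (x : E) : 0 ≤ bump r δ x := by
  unfold bump
  positivity

variable [FiniteDimensional ℝ E] [MeasurableSpace E] [BorelSpace E] {μ : Measure E}
  [μ.IsAddHaarMeasure]

lemma integrable_bump (hr : Module.finrank ℝ E < r) (hδ : 0 < δ) :
    Integrable (bump (E := E) r δ) μ :=
  (((integrable_comp_smul_iff μ _ hδ.ne').2 (integrable_rpow_neg_one_add_norm_sq hr)).const_mul _ :)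

variable (r) in
lemma integral_bump (hδ : 0 < δ) :
    ∫ x, bump r δ x ∂μ = ∫ x : E, (1 + ‖x‖ ^ 2) ^ (-r / 2) ∂μ := by
  unfold bump
  rw [integral_const_mul,
    Measure.integral_comp_smul μ (fun x : E ↦ (1 + ‖x‖ ^ 2) ^ (-r / 2)) δ,
    abs_of_pos (by positivity), smul_eq_mul, mul_inv_cancel_left₀ (by positivity)]

end Bump

lemma bump_four_complex (δ : ℝ) (x : ℂ) : bump 4 δ x = δ ^ 2 / (1 + δ ^ 2 * ‖x‖ ^ 2) ^ 2 := by
  have hpow : ∀ t : ℝ, 0 ≤ t → t ^ (-4 / 2 : ℝ) = (t ^ 2)⁻¹ := fun t ht ↦ by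
    rw [← Real.rpow_natCast, ← Real.rpow_neg ht]
    norm_num
  rw [bump, Complex.finrank_real_complex, norm_smul, mul_pow, Real.norm_eq_abs, sq_abs,
    hpow _ (by positivity), div_eq_mul_inv]

lemma bump_three_complex {a : ℝ} (ha : 0 < a) (x : ℂ) :
    bump 3 (√a)⁻¹ x = √a / ((‖x‖ ^ 2 + a) * √(‖x‖ ^ 2 + a)) := by
  have hz : 0 < ‖x‖ ^ 2 + a := by positivity
  have hsq : √a ^ 2 = a := Real.sq_sqrt ha.le
  have hbase : 1 + ‖(√a)⁻¹ • x‖ ^ 2 = (‖x‖ ^ 2 + a) / a := by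
    rw [norm_smul, mul_pow, Real.norm_eq_abs, sq_abs, inv_pow, hsq]
    field_simp
    ring
  have hpow : ∀ {t : ℝ}, 0 < t → t ^ (-3 / 2 : ℝ) = (t * √t)⁻¹ := fun ht ↦ by
    rw [Real.sqrt_eq_rpow, ← Real.rpow_one_add' ht.le (by norm_num), ← Real.rpow_neg ht.le]
    norm_num
  rw [bump, Complex.finrank_real_complex, hbase, hpow (by positivity), Real.sqrt_div hz.le,
    inv_pow, hsq]
  field_simp

/-! ### Polar coordinates -/

lemma integrableOn_polarCoord {f : ℂ → ℝ} (hm : Measurable f) (hf : Integrable f) :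
    IntegrableOn (fun p ↦ p.1 * f (Complex.polarCoord.symm p)) (Ioi 0 ×ˢ Ioo (-π) π) := by
  have hpolar : Measurable fun p : ℝ × ℝ ↦ Complex.polarCoord.symm p := by
    simp only [Complex.polarCoord_symm_apply]
    fun_prop
  refine ⟨(measurable_fst.mul (hm.comp hpolar)).aestronglyMeasurable, ?_⟩
  have hlint := Complex.lintegral_comp_polarCoord_symm fun x ↦ ‖f x‖ₑ
  rw [polarCoord_target] at hlint
  rw [hasFiniteIntegral_iff_enorm]
  calc ∫⁻ p in Ioi 0 ×ˢ Ioo (-π) π, ‖p.1 * f (Complex.polarCoord.symm p)‖ₑ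
      = ∫⁻ p in Ioi 0 ×ˢ Ioo (-π) π,
          ENNReal.ofReal p.1 • ‖f (Complex.polarCoord.symm p)‖ₑ := by
        refine setLIntegral_congr_fun (measurableSet_Ioi.prod measurableSet_Ioo) fun p hp ↦ ?_
        simp only [enorm_mul, smul_eq_mul, Real.enorm_of_nonneg (le_of_lt hp.1)]
    _ = ∫⁻ x, ‖f x‖ₑ := hlint
    _ < ⊤ := hf.hasFiniteIntegral

lemma integral_eq_integral_integral_polarCoord {f : ℂ → ℝ} (hm : Measurable f)
    (hf : Integrable f) :
    ∫ x, f x = ∫ r in Ioi 0, r * ∫ θ in Ioo (-π) π, f (Complex.polarCoord.symm (r, θ)) := by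
  rw [← Complex.integral_comp_polarCoord_symm f, polarCoord_target]
  simp only [smul_eq_mul, ← integral_const_mul]
  exact setIntegral_prod _ (integrableOn_polarCoord hm hf)

lemma inner_polarCoord_symm (ω : ℂ) (r θ : ℝ) :
    inner ℝ ω (Complex.polarCoord.symm (r, θ)) = r * (‖ω‖ * Real.cos (θ - ω.arg)) := by
  rw [Complex.inner, Complex.polarCoord_symm_apply, Real.cos_sub]
  have hre := Complex.norm_mul_cos_arg ω
  have him := Complex.norm_mul_sin_arg ω
  simp only [Complex.mul_re, Complex.mul_im, Complex.add_re, Complex.add_im, Complex.conj_re,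
    Complex.conj_im, Complex.ofReal_re, Complex.ofReal_im, Complex.I_re, Complex.I_im]
  linear_combination -r * Real.cos θ * hre - r * Real.sin θ * him

lemma hasDerivAt_arctan_tan_div {Δ θ : ℝ} (hΔ : Δ ≠ 0) (hθ : Real.cos θ ≠ 0) :
    HasDerivAt (fun θ ↦ Δ⁻¹ * Real.arctan (Real.tan θ / Δ))
      (1 + (Δ ^ 2 - 1) * Real.cos θ ^ 2)⁻¹ θ := by
  refine ((((Real.hasDerivAt_tan hθ).div_const Δ).arctan).const_mul Δ⁻¹).congr_deriv ?_
  have hden : 1 + (Δ ^ 2 - 1) * Real.cos θ ^ 2 = Δ ^ 2 * Real.cos θ ^ 2 + Real.sin θ ^ 2 := by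
    linear_combination -Real.sin_sq_add_cos_sq θ
  rw [hden, Real.tan_eq_sin_div_cos]
  field_simp

lemma continuous_inv_one_add_mul_cos_sq {s : ℝ} (hs : 0 ≤ s) :
    Continuous fun θ : ℝ ↦ (1 + s * Real.cos θ ^ 2)⁻¹ :=
  Continuous.inv₀ (by fun_prop) fun θ ↦ by positivity

lemma integral_inv_one_add_mul_cos_sq {s : ℝ} (hs : 0 ≤ s) :
    ∫ θ in -(π / 2)..π / 2, (1 + s * Real.cos θ ^ 2)⁻¹ = π / √(1 + s) := by
  set Δ := √(1 + s)
  have hΔ : 0 < Δ := Real.sqrt_pos.2 (by positivity)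
  have hs' : s = Δ ^ 2 - 1 := by rw [Real.sq_sqrt (by positivity)]; ring
  rw [intervalIntegral.integral_eq_sub_of_hasDerivAt_of_tendsto
    (f := fun θ ↦ Δ⁻¹ * Real.arctan (Real.tan θ / Δ))
    (fa := Δ⁻¹ * -(π / 2)) (fb := Δ⁻¹ * (π / 2)) (by linarith [Real.pi_pos])
    (fun θ hθ ↦ by
      rw [hs']
      exact hasDerivAt_arctan_tan_div hΔ.ne' (Real.cos_pos_of_mem_Ioo hθ).ne')
    ((continuous_inv_one_add_mul_cos_sq hs).intervalIntegrable _ _)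
    (((Real.tendsto_arctan_atBot.mono_right nhdsWithin_le_nhds).comp
      (Real.tendsto_tan_neg_pi_div_two.atBot_div_const hΔ)).const_mul _)
    (((Real.tendsto_arctan_atTop.mono_right nhdsWithin_le_nhds).comp
      (Real.tendsto_tan_pi_div_two.atTop_div_const hΔ)).const_mul _)]
  field_simp
  ring

lemma integral_inv_one_add_mul_cos_sub_sq {s : ℝ} (hs : 0 ≤ s) (φ : ℝ) :
    ∫ θ in Ioo (-π) π, (1 + s * Real.cos (θ - φ) ^ 2)⁻¹ = 2 * π / √(1 + s) := by
  have hper : Function.Periodic (fun θ : ℝ ↦ (1 + s * Real.cos θ ^ 2)⁻¹) π := fun θ ↦ by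
    simp only [Real.cos_add_pi, neg_sq]
  calc ∫ θ in Ioo (-π) π, (1 + s * Real.cos (θ - φ) ^ 2)⁻¹
      = ∫ θ in (-π - φ)..(-π - φ) + 2 • π, (1 + s * Real.cos θ ^ 2)⁻¹ := by
        rw [← integral_Ioc_eq_integral_Ioo,
          ← intervalIntegral.integral_of_le (by linarith [Real.pi_pos]),
          intervalIntegral.integral_comp_sub_right (fun θ ↦ (1 + s * Real.cos θ ^ 2)⁻¹) φ]
        congr 1
        simp only [two_nsmul]
        ring
    _ = 2 • ∫ θ in -(π / 2)..-(π / 2) + π, (1 + s * Real.cos θ ^ 2)⁻¹ := by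
        rw [← natCast_zsmul, ← natCast_zsmul, hper.intervalIntegral_add_zsmul_eq _ _
            fun a b ↦ (continuous_inv_one_add_mul_cos_sq hs).intervalIntegrable a b,
          hper.intervalIntegral_add_eq]
    _ = 2 * π / √(1 + s) := by
        rw [show -(π / 2) + π = π / 2 by ring, integral_inv_one_add_mul_cos_sq hs, two_nsmul]
        ring

end Generalities

section EffectiveCoefficient

open Filter Topology
open scoped Real

/-! ### The effective coefficient -/

variable {c ε x : ℝ}

lemma lam_two_sq (hε : 0 < ε) (hε1 : ε < 1) : lam 2 ε ^ 2 = (Real.log (1 / ε ^ 2))⁻¹ := by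
  have hlog : 0 ≤ Real.log (1 / ε ^ 2) :=
    Real.log_nonneg (one_le_one_div (by positivity) (pow_le_one₀ hε.le hε1.le))
  rw [lam, if_pos rfl, inv_pow, Real.sq_sqrt hlog]

lemma lam_two_sq_pos (hε : 0 < ε) (hε1 : ε < 1) : 0 < lam 2 ε ^ 2 := by
  rw [lam_two_sq hε hε1]
  exact inv_pos.2 (Real.log_pos (one_lt_one_div (by positivity)
    (pow_lt_one₀ hε.le hε1 two_ne_zero)))

lemma lam_two_sq_le_one (hε : 0 < ε) (hε3 : ε ^ 2 ≤ 1 / 3) : lam 2 ε ^ 2 ≤ 1 := by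
  rw [lam_two_sq hε (by nlinarith)]
  refine inv_le_one_of_one_le₀ ((Real.le_log_iff_exp_le (by positivity)).2 ?_)
  calc Real.exp 1 ≤ 3 := Real.exp_one_lt_three.le
    _ ≤ 1 / ε ^ 2 := by rw [le_div_iff₀ (by positivity)]; linarith

lemma Leps_nonneg (hx : 0 ≤ x) : 0 ≤ Leps ε x :=
  mul_nonneg (sq_nonneg _) (Real.log_nonneg (le_add_of_nonneg_right (by positivity)))

lemma Leps_le_two (hε : 0 < ε) (hε5 : ε ^ 2 ≤ 1 / 5) (hx : 1 / 4 ≤ x) : Leps ε x ≤ 2 := by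
  have hlog : 0 < Real.log (1 / ε ^ 2) := Real.log_pos (by rw [lt_div_iff₀] <;> nlinarith)
  have harg : 1 + 1 / (ε ^ 2 * x) ≤ (1 / ε ^ 2) ^ 2 := by
    have hx4 : 1 / x ≤ 4 := by rw [div_le_iff₀] <;> linarith
    calc 1 + 1 / (ε ^ 2 * x) = 1 + 1 / ε ^ 2 * (1 / x) := by rw [one_div_mul_one_div]
      _ ≤ 1 / ε ^ 2 * (1 / 5 + 4) := by
        have : 1 ≤ 1 / ε ^ 2 * (1 / 5) := by field_simp; linarith
        have : 1 / ε ^ 2 * (1 / x) ≤ 1 / ε ^ 2 * 4 := by gcongr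
        linarith
      _ ≤ (1 / ε ^ 2) ^ 2 := by
        rw [sq (1 / ε ^ 2)]
        gcongr
        rw [le_div_iff₀ (by positivity)]
        linarith
  rw [Leps, lam_two_sq hε (by nlinarith), inv_mul_le_iff₀ hlog]
  calc Real.log (1 + 1 / (ε ^ 2 * x)) ≤ Real.log ((1 / ε ^ 2) ^ 2) :=
        Real.log_le_log (by positivity) harg
    _ = Real.log (1 / ε ^ 2) * 2 := by rw [Real.log_pow, mul_comm, Nat.cast_ofNat]

lemma hasDerivAt_Leps (hε : 0 < ε) (hx : 0 < x) :
    HasDerivAt (Leps ε) (-(lam 2 ε ^ 2 / (x * (1 + ε ^ 2 * x)))) x := by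
  have hinv : HasDerivAt (fun x ↦ 1 + 1 / (ε ^ 2 * x)) (-(ε ^ 2 * 1) / (ε ^ 2 * x) ^ 2) x := by
    simpa only [one_div, id] using
      (((hasDerivAt_id x).const_mul (ε ^ 2)).fun_inv (by positivity)).const_add 1
  refine ((hinv.log (by positivity)).const_mul _).congr_deriv ?_
  field_simp
  ring

lemma tendsto_Leps_atTop (hε : 0 < ε) : Tendsto (Leps ε) atTop (𝓝 0) := by
  have harg : Tendsto (fun x ↦ 1 + 1 / (ε ^ 2 * x)) atTop (𝓝 (1 + 0)) :=
    (tendsto_const_nhds.div_atTop (tendsto_id.const_mul_atTop (by positivity))).const_add 1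
  have hlog := (harg.log (by norm_num)).const_mul (lam 2 ε ^ 2)
  rwa [add_zero, Real.log_one, mul_zero] at hlog

lemma Gfun_zero : Gfun c 0 = 0 := by simp [Gfun]

lemma Gfun_nonneg (hc : 0 ≤ c) (hx : 0 ≤ x) : 0 ≤ Gfun c x :=
  mul_nonneg (inv_nonneg.2 hc) (sub_nonneg.2
    (Real.one_le_rpow (le_add_of_nonneg_left (by positivity)) (by norm_num)))

lemma Gfun_le_self (hc : 0 < c) (hx : 0 ≤ x) : Gfun c x ≤ x := by
  have hbern : (1 + 3 * c * x / (2 * π)) ^ (2 / 3 : ℝ) ≤ 1 + 2 / 3 * (3 * c * x / (2 * π)) :=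
    rpow_one_add_le_one_add_mul_self (neg_one_lt_zero.le.trans (by positivity)) (by norm_num)
      (by norm_num)
  rw [Gfun, inv_mul_le_iff₀ hc, add_comm]
  calc (1 + 3 * c * x / (2 * π)) ^ (2 / 3 : ℝ) - 1 ≤ c * x / π := by
        rw [sub_le_iff_le_add']
        exact hbern.trans_eq (by field_simp)
    _ ≤ c * x := div_le_self (by positivity) (by linarith [Real.pi_gt_three])

-- The exponent `2/3` and the constants in `G` are exactly those making it solve this ODE.
lemma hasDerivAt_Gfun (hc : 0 < c) (hx : 0 ≤ x) :
    HasDerivAt (Gfun c) (π * √(1 + c * Gfun c x))⁻¹ x := by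
  have hb : 0 < 3 * c * x / (2 * π) + 1 := by positivity
  have hsqrt : √(1 + c * Gfun c x) = (3 * c * x / (2 * π) + 1) ^ (1 / 3 : ℝ) := by
    rw [Gfun, mul_inv_cancel_left₀ hc.ne', add_sub_cancel, Real.sqrt_eq_rpow,
      ← Real.rpow_mul hb.le]
    norm_num
  have hlin : HasDerivAt (fun x ↦ 3 * c * x / (2 * π) + 1) (3 * c * 1 / (2 * π)) x :=
    (((hasDerivAt_id x).const_mul (3 * c)).div_const _).add_const _
  refine (((hlin.rpow_const (p := 2 / 3) (Or.inl hb.ne')).sub_const 1).const_mul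
    c⁻¹).congr_deriv ?_
  rw [hsqrt, show (2 / 3 - 1 : ℝ) = -(1 / 3) by norm_num, Real.rpow_neg hb.le]
  field_simp

/-- The effective coefficient `G ∘ L^ε` of the equation at scale `ε` (with `c = |w|²`). -/
def Geps (c ε x : ℝ) : ℝ := Gfun c (Leps ε x)

lemma Geps_nonneg (hc : 0 ≤ c) (hx : 0 ≤ x) : 0 ≤ Geps c ε x :=
  Gfun_nonneg hc (Leps_nonneg hx)

lemma Geps_le_two (hc : 0 < c) (hε : 0 < ε) (hε5 : ε ^ 2 ≤ 1 / 5) (hx : 1 / 4 ≤ x) :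
    Geps c ε x ≤ 2 :=
  (Gfun_le_self hc (Leps_nonneg (by linarith))).trans (Leps_le_two hε hε5 hx)

lemma measurable_Geps (c ε : ℝ) : Measurable (Geps c ε) := by
  unfold Geps Gfun Leps
  fun_prop

lemma hasDerivAt_Geps (hc : 0 < c) (hε : 0 < ε) (hx : 0 < x) :
    HasDerivAt (Geps c ε)
      (-(lam 2 ε ^ 2 / (π * √(1 + c * Geps c ε x) * (x * (1 + ε ^ 2 * x))))) x := by
  refine ((hasDerivAt_Gfun hc (Leps_nonneg hx.le)).comp x
    (hasDerivAt_Leps hε hx)).congr_deriv ?_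
  rw [Geps]
  field_simp

lemma tendsto_Geps_atTop (hc : 0 < c) (hε : 0 < ε) : Tendsto (Geps c ε) atTop (𝓝 0) := by
  have hG := (hasDerivAt_Gfun hc le_rfl).continuousAt.tendsto
  rw [Gfun_zero] at hG
  exact hG.comp (tendsto_Leps_atTop hε)

lemma abs_Geps_sub_Geps_le (hc : 0 < c) (hε : 0 < ε) {m z : ℝ} (hm : 0 < m) (hx : m ≤ x)
    (hz : m ≤ z) : |Geps c ε x - Geps c ε z| ≤ lam 2 ε ^ 2 / m * |x - z| := by
  refine Convex.norm_image_sub_le_of_norm_hasDerivWithin_le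
    (fun t ht ↦ (hasDerivAt_Geps hc hε (hm.trans_le ht)).hasDerivWithinAt)
    (fun t (ht : m ≤ t) ↦ ?_) (convex_Ici m) hz hx
  have ht0 : 0 < t := hm.trans_le ht
  have hg := Geps_nonneg (ε := ε) hc.le ht0.le
  have hsqrt : 1 ≤ √(1 + c * Geps c ε t) :=
    Real.one_le_sqrt.2 (le_add_of_nonneg_right (by positivity))
  rw [norm_neg, Real.norm_of_nonneg (by positivity)]
  gcongr
  calc m ≤ 1 * 1 * (t * 1) := by linarith
    _ ≤ π * √(1 + c * Geps c ε t) * (t * (1 + ε ^ 2 * t)) := by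
      gcongr
      · linarith [Real.pi_gt_three]
      · exact le_add_of_nonneg_right (by positivity)

end EffectiveCoefficient

section ContinuumKernel

open MeasureTheory Set Filter Topology
open scoped Real RealInnerProductSpace

/-! ### The continuum kernel -/

section InnerProductSpace

variable {E : Type*} [NormedAddCommGroup E] [InnerProductSpace ℝ E]

/-- The squared length of the projection of `w` on the direction of `x` (`0` at `x = 0`); it
is the angular part of the quadratic form `⟪w, x⟫²`. -/
def directionalSq (w x : E) : ℝ := ⟪w, x⟫ ^ 2 / ‖x‖ ^ 2

lemma directionalSq_nonneg (w x : E) : 0 ≤ directionalSq w x := by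
  unfold directionalSq
  positivity

lemma inner_sq_le_norm_sq_mul_norm_sq (w x : E) : ⟪w, x⟫ ^ 2 ≤ ‖w‖ ^ 2 * ‖x‖ ^ 2 := by
  rw [← mul_pow, sq_le_sq, abs_of_nonneg (by positivity : 0 ≤ ‖w‖ * ‖x‖)]
  exact abs_real_inner_le_norm w x

lemma directionalSq_le (w x : E) : directionalSq w x ≤ ‖w‖ ^ 2 :=
  div_le_of_le_mul₀ (by positivity) (by positivity) (inner_sq_le_norm_sq_mul_norm_sq w x)

lemma norm_sq_mul_directionalSq (w x : E) : ‖x‖ ^ 2 * directionalSq w x = ⟪w, x⟫ ^ 2 := by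
  obtain rfl | hx := eq_or_ne x 0
  · simp
  · exact mul_div_cancel₀ _ (by positivity)

/-- The continuum kernel of which the sum defining `P^ε` is, up to an error of order one, a
Riemann sum: the denominator is `z (1 + q G^ε(z))`, with `z = |x|² + a` and `q` the angular part
of `⟪w, x⟫²`, and the sharp cutoff `ε |x| ≤ 1` is replaced by the factor `(1 + ε² z)⁻¹` that
`(L^ε)'` carries. -/
def kernel (w : E) (ε a : ℝ) (x : E) : ℝ :=
  ((‖x‖ ^ 2 + a) * (1 + ε ^ 2 * (‖x‖ ^ 2 + a)) *
    (1 + directionalSq w x * Geps (‖w‖ ^ 2) ε (‖x‖ ^ 2 + a)))⁻¹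

lemma one_le_one_add_directionalSq_mul_Geps (w x : E) (ε : ℝ) {z : ℝ} (hz : 0 ≤ z) :
    1 ≤ 1 + directionalSq w x * Geps (‖w‖ ^ 2) ε z :=
  le_add_of_nonneg_right (mul_nonneg (directionalSq_nonneg w x) (Geps_nonneg (by positivity) hz))

lemma kernel_nonneg {a : ℝ} (w : E) (ε : ℝ) (ha : 0 ≤ a) (x : E) : 0 ≤ kernel w ε a x := by
  have := one_le_one_add_directionalSq_mul_Geps w x ε (by positivity : 0 ≤ ‖x‖ ^ 2 + a)
  unfold kernel
  positivity

lemma kernel_le {a : ℝ} (w : E) (ε : ℝ) (ha : 0 < a) (x : E) :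
    kernel w ε a x ≤ ((‖x‖ ^ 2 + a) * (1 + ε ^ 2 * (‖x‖ ^ 2 + a)))⁻¹ :=
  inv_anti₀ (by positivity) (le_mul_of_one_le_right (by positivity)
    (one_le_one_add_directionalSq_mul_Geps w x ε (by positivity)))

lemma measurable_kernel [MeasurableSpace E] [BorelSpace E] [SecondCountableTopology E] (w : E)
    (ε a : ℝ) : Measurable (kernel w ε a) := by
  have hG := measurable_Geps (‖w‖ ^ 2) ε
  unfold kernel directionalSq
  fun_prop

end InnerProductSpace

variable {ω : ℂ} {ε a : ℝ}

lemma integrable_kernel (ω : ℂ) (hε : 0 < ε) (ha : 0 < a) : Integrable (kernel ω ε a) := by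
  have hδ : 0 < (√a)⁻¹ := by positivity
  refine ((integrable_bump (r := 4) (by norm_num) hδ).const_mul (1 / (ε ^ 2 * a))).mono'
    (measurable_kernel ω ε a).aestronglyMeasurable (.of_forall fun x ↦ ?_)
  rw [Real.norm_of_nonneg (kernel_nonneg ω ε ha.le x), bump_four_complex, inv_pow,
    Real.sq_sqrt ha.le]
  calc kernel ω ε a x ≤ ((‖x‖ ^ 2 + a) * (1 + ε ^ 2 * (‖x‖ ^ 2 + a)))⁻¹ := kernel_le ω ε ha x
    _ ≤ ((‖x‖ ^ 2 + a) * (ε ^ 2 * (‖x‖ ^ 2 + a)))⁻¹ := by gcongr; simp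
    _ = 1 / (ε ^ 2 * a) * (a⁻¹ / (1 + a⁻¹ * ‖x‖ ^ 2) ^ 2) := by field_simp; ring

lemma kernel_polarCoord_symm (ω : ℂ) (ε a : ℝ) {r : ℝ} (hr : r ≠ 0) (θ : ℝ) :
    kernel ω ε a (Complex.polarCoord.symm (r, θ)) =
      ((r ^ 2 + a) * (1 + ε ^ 2 * (r ^ 2 + a)))⁻¹ *
        (1 + ‖ω‖ ^ 2 * Geps (‖ω‖ ^ 2) ε (r ^ 2 + a) * Real.cos (θ - ω.arg) ^ 2)⁻¹ := by
  have hdir : directionalSq ω (Complex.polarCoord.symm (r, θ)) =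
      ‖ω‖ ^ 2 * Real.cos (θ - ω.arg) ^ 2 := by
    rw [directionalSq, inner_polarCoord_symm, Complex.norm_polarCoord_symm, sq_abs]
    field_simp
  rw [kernel, hdir, Complex.norm_polarCoord_symm, sq_abs, mul_inv, mul_right_comm]

lemma hasDerivAt_Geps_sq_add (hω : ω ≠ 0) (hε : 0 < ε) (hε1 : ε < 1) (ha : 0 < a) (r : ℝ) :
    HasDerivAt (fun r ↦ -(π ^ 2 / lam 2 ε ^ 2 * Geps (‖ω‖ ^ 2) ε (r ^ 2 + a)))
      (r * (((r ^ 2 + a) * (1 + ε ^ 2 * (r ^ 2 + a)))⁻¹ *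
        (2 * π / √(1 + ‖ω‖ ^ 2 * Geps (‖ω‖ ^ 2) ε (r ^ 2 + a))))) r := by
  have hlam : lam 2 ε ≠ 0 := (pow_ne_zero_iff two_ne_zero).1 (lam_two_sq_pos hε hε1).ne'
  have hz : HasDerivAt (fun r ↦ r ^ 2 + a) (2 * r) r := by
    simpa using (hasDerivAt_pow 2 r).add_const a
  have hG := Geps_nonneg (ε := ε) (sq_nonneg ‖ω‖) (by positivity : 0 ≤ r ^ 2 + a)
  refine ((((hasDerivAt_Geps (by positivity) hε (by positivity)).comp r hz).const_mul
    (π ^ 2 / lam 2 ε ^ 2)).neg).congr_deriv ?_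
  field_simp

lemma integral_kernel (hω : ω ≠ 0) (hε : 0 < ε) (hε1 : ε < 1) (ha : 0 < a) :
    ∫ x, kernel ω ε a x = π ^ 2 / lam 2 ε ^ 2 * Geps (‖ω‖ ^ 2) ε a := by
  have hangular : ∀ r ∈ Ioi (0 : ℝ),
      r * ∫ θ in Ioo (-π) π, kernel ω ε a (Complex.polarCoord.symm (r, θ)) =
        r * (((r ^ 2 + a) * (1 + ε ^ 2 * (r ^ 2 + a)))⁻¹ *
          (2 * π / √(1 + ‖ω‖ ^ 2 * Geps (‖ω‖ ^ 2) ε (r ^ 2 + a)))) := fun r hr ↦ by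
    have hG := Geps_nonneg (ε := ε) (sq_nonneg ‖ω‖) (by positivity : 0 ≤ r ^ 2 + a)
    simp only [kernel_polarCoord_symm ω ε a (ne_of_gt hr)]
    rw [integral_const_mul, integral_inv_one_add_mul_cos_sub_sq (by positivity)]
  have hlim : Tendsto (fun r : ℝ ↦ -(π ^ 2 / lam 2 ε ^ 2 * Geps (‖ω‖ ^ 2) ε (r ^ 2 + a))) atTop
      (𝓝 (-(π ^ 2 / lam 2 ε ^ 2 * 0))) :=
    (((tendsto_Geps_atTop (by positivity) hε).comp
      (tendsto_atTop_add_const_right _ a (tendsto_pow_atTop two_ne_zero))).const_mul _).neg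
  rw [integral_eq_integral_integral_polarCoord (measurable_kernel ω ε a)
      (integrable_kernel ω hε ha),
    setIntegral_congr_fun measurableSet_Ioi hangular,
    integral_Ioi_of_hasDerivAt_of_nonneg'
      (fun r _ ↦ hasDerivAt_Geps_sq_add hω hε hε1 ha r)
      (fun r hr ↦ mul_nonneg (le_of_lt hr) (by positivity)) hlim]
  simp

end ContinuumKernel

section Comparison

open scoped RealInnerProductSpace

/-! ### Pointwise comparison with the kernel -/

lemma abs_norm_sq_sub_norm_sq_le {E : Type*} [NormedAddCommGroup E] (x y : E) :
    |‖y‖ ^ 2 - ‖x‖ ^ 2| ≤ ‖y - x‖ * (‖y - x‖ + 2 * ‖x‖) := by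
  have hsum : ‖y‖ + ‖x‖ ≤ ‖y - x‖ + 2 * ‖x‖ := by linarith [norm_sub_norm_le y x]
  rw [sq_sub_sq, abs_mul, abs_of_nonneg (by positivity : 0 ≤ ‖y‖ + ‖x‖), mul_comm]
  gcongr
  exact abs_norm_sub_norm_le y x

lemma norm_sq_le_two_mul_norm_sq_add {E : Type*} [NormedAddCommGroup E] {x y : E} {δ : ℝ}
    (h : ‖y - x‖ ≤ δ) :
    ‖x‖ ^ 2 ≤ 2 * ‖y‖ ^ 2 + 2 * δ ^ 2 := by
  have hx : ‖x‖ ≤ ‖y‖ + δ := by linarith [norm_sub_norm_le x y, norm_sub_rev x y]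
  nlinarith [sq_nonneg (‖y‖ - δ), norm_nonneg x]

lemma abs_inner_sq_sub_inner_sq_le {E : Type*} [NormedAddCommGroup E] [InnerProductSpace ℝ E]
    (w x y : E) :
    |⟪w, y⟫ ^ 2 - ⟪w, x⟫ ^ 2| ≤ ‖w‖ ^ 2 * (‖y - x‖ * (‖y - x‖ + 2 * ‖x‖)) := by
  have hsum : ‖y + x‖ ≤ ‖y - x‖ + 2 * ‖x‖ :=
    calc ‖y + x‖ = ‖(y - x) + (x + x)‖ := by congr 1; abel
      _ ≤ ‖y - x‖ + (‖x‖ + ‖x‖) := (norm_add_le _ _).trans (by gcongr; exact norm_add_le _ _)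
      _ = ‖y - x‖ + 2 * ‖x‖ := by ring
  calc |⟪w, y⟫ ^ 2 - ⟪w, x⟫ ^ 2| = |⟪w, y + x⟫| * |⟪w, y - x⟫| := by
        rw [sq_sub_sq, abs_mul, inner_add_right, inner_sub_right]
    _ ≤ (‖w‖ * ‖y + x‖) * (‖w‖ * ‖y - x‖) := by
        gcongr <;> exact abs_real_inner_le_norm _ _
    _ ≤ (‖w‖ * (‖y - x‖ + 2 * ‖x‖)) * (‖w‖ * ‖y - x‖) := by gcongr
    _ = ‖w‖ ^ 2 * (‖y - x‖ * (‖y - x‖ + 2 * ‖x‖)) := by ring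

lemma abs_inv_sub_inv_le_mul_div_sq {A B D K z : ℝ} (hA : 0 < A) (hz : 0 < z) (hzA : z ≤ K * A)
    (hzB : z ≤ B) (hD : |A - B| ≤ D) : |A⁻¹ - B⁻¹| ≤ K * D / z ^ 2 := by
  have hB : 0 < B := hz.trans_le hzB
  have hprod : z ^ 2 ≤ K * (A * B) := by
    rw [sq, ← mul_assoc]
    exact mul_le_mul hzA hzB hz.le (hz.le.trans hzA)
  rw [inv_sub_inv hA.ne' hB.ne', abs_div, abs_sub_comm, abs_of_pos (mul_pos hA hB),
    div_le_div_iff₀ (by positivity) (by positivity)]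
  calc |A - B| * z ^ 2 ≤ D * (K * (A * B)) :=
        mul_le_mul hD hprod (sq_nonneg z) ((abs_nonneg _).trans hD)
    _ = K * D * (A * B) := by ring

lemma abs_inv_add_mul_sub_inv_mul_one_add_mul_le {Γ Γw z q g g' c K N M : ℝ}
    (hΓ : 0 < Γ) (hz : 0 < z) (hzΓ : z ≤ K * Γ)
    (hΓw : 0 ≤ Γw) (hq : 0 ≤ q) (hqc : q ≤ c) (hg : 0 ≤ g) (hgN : g ≤ N)
    (hg' : 0 ≤ g') (hΓz : |Γ - z| ≤ M) (hΓwz : |Γw - z * q| ≤ c * M)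
    (hgg' : z * |g - g'| ≤ K * M) :
    |(Γ + Γw * g)⁻¹ - (z * (1 + q * g'))⁻¹| ≤ K * ((1 + (N + K) * c) * M) / z ^ 2 := by
  have hK : 0 ≤ K := (pos_of_mul_pos_left (hz.trans_le hzΓ) hΓ.le).le
  have hA : Γ ≤ Γ + Γw * g := le_add_of_nonneg_right (by positivity)
  refine abs_inv_sub_inv_le_mul_div_sq (hΓ.trans_le hA) hz (hzΓ.trans (by gcongr))
    (le_mul_of_one_le_right hz.le (le_add_of_nonneg_right (by positivity))) ?_
  calc |Γ + Γw * g - z * (1 + q * g')|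
      = |(Γ - z) + ((Γw - z * q) * g + q * (z * (g - g')))| := by ring_nf
    _ ≤ |Γ - z| + (|Γw - z * q| * g + q * (z * |g - g'|)) := by
        refine (abs_add_le _ _).trans (add_le_add_right ((abs_add_le _ _).trans_eq ?_) _)
        rw [abs_mul, abs_mul, abs_mul, abs_of_nonneg hg, abs_of_nonneg hq, abs_of_pos hz]
    _ ≤ M + (c * M * N + c * (K * M)) := by
        have hcM : 0 ≤ c * M := (abs_nonneg _).trans hΓwz
        gcongr
        exact hq.trans hqc
    _ = (1 + (N + K) * c) * M := by ring

lemma mul_abs_Geps_sub_Geps_le {c ε Γ z K : ℝ} (hc : 0 < c) (hε : 0 < ε) (hε3 : ε ^ 2 ≤ 1 / 3)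
    (hK : 1 ≤ K) (hz : 0 < z) (hzΓ : z ≤ K * Γ) :
    z * |Geps c ε Γ - Geps c ε z| ≤ K * |Γ - z| := by
  have hlam := lam_two_sq_le_one hε hε3
  calc z * |Geps c ε Γ - Geps c ε z| ≤ z * (1 / (z / K) * |Γ - z|) := by
        gcongr
        exact (abs_Geps_sub_Geps_le hc hε (by positivity)
          ((div_le_iff₀' (by positivity)).2 hzΓ) (div_le_self hz.le hK)).trans (by gcongr)
    _ = K * |Γ - z| := by field_simp

section Plane

variable {ω x y : ℂ} {ε a e f : ℝ}

-- The displacement costs `2 * 2 ^ 2 ≤ 32 * e`, and `a ≤ 2 * e`.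
lemma norm_sq_add_le_thirtyfour_mul (hyx : ‖y - x‖ ≤ 2) (ha : 1 / 2 ≤ a) (hae : a / 2 ≤ e) :
    ‖x‖ ^ 2 + a ≤ 34 * (‖y‖ ^ 2 + e) := by
  nlinarith [norm_sq_le_two_mul_norm_sq_add hyx, sq_nonneg ‖y‖]

lemma displacement_div_sq_le_bump (ha : 1 / 2 ≤ a) (x : ℂ) :
    (4 + 4 * ‖x‖ + a) / (‖x‖ ^ 2 + a) ^ 2 ≤ 15 * bump 3 (√a)⁻¹ x := by
  have ha0 : 0 < a := by linarith
  set z := ‖x‖ ^ 2 + a with hz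
  have hz0 : 0 < z := by positivity
  have hzz : √z ^ 2 = z := Real.sq_sqrt hz0.le
  have haa : √a ^ 2 = a := Real.sq_sqrt ha0.le
  have haz : √a ≤ √z := Real.sqrt_le_sqrt (by linarith [sq_nonneg ‖x‖])
  have hxz : ‖x‖ ≤ √z := Real.le_sqrt_of_sq_le (by linarith)
  have ha2 : 2 / 3 ≤ √a := Real.le_sqrt_of_sq_le (by linarith)
  have hM : 4 + 4 * ‖x‖ + a ≤ 15 * (√a * √z) := by nlinarith [norm_nonneg x]
  rw [bump_three_complex ha0, ← hz]
  calc (4 + 4 * ‖x‖ + a) / z ^ 2 ≤ 15 * (√a * √z) / z ^ 2 := by gcongr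
    _ = 15 * (√a / (z * √z)) := by field_simp; rw [hzz]

lemma abs_inv_sub_inv_le_bump (hω : ω ≠ 0) (hε : 0 < ε) (hε5 : ε ^ 2 ≤ 1 / 5)
    (hyx : ‖y - x‖ ≤ 2) (ha : 1 / 2 ≤ a) (hae : a / 2 ≤ e) (hea : e ≤ a) (hf : 0 ≤ f)
    (hfa : f ≤ ‖ω‖ ^ 2 * a) :
    |(‖y‖ ^ 2 + e + (⟪ω, y⟫ ^ 2 + f) * Geps (‖ω‖ ^ 2) ε (‖y‖ ^ 2 + e))⁻¹ -
        ((‖x‖ ^ 2 + a) * (1 + directionalSq ω x * Geps (‖ω‖ ^ 2) ε (‖x‖ ^ 2 + a)))⁻¹| ≤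
      18360 * (1 + ‖ω‖ ^ 2) * bump 3 (√a)⁻¹ x := by
  have hω2 : 0 < ‖ω‖ ^ 2 := by positivity
  have hshift : ‖y - x‖ * (‖y - x‖ + 2 * ‖x‖) ≤ 4 + 4 * ‖x‖ := by
    nlinarith [norm_nonneg x, norm_nonneg (y - x)]
  have hzΓ := norm_sq_add_le_thirtyfour_mul hyx ha hae
  have hqa : directionalSq ω x * a ≤ ‖ω‖ ^ 2 * a := by gcongr; exact directionalSq_le ω x
  have hqa0 : 0 ≤ directionalSq ω x * a := mul_nonneg (directionalSq_nonneg ω x) (by linarith)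
  have hΓz : |‖y‖ ^ 2 + e - (‖x‖ ^ 2 + a)| ≤ 4 + 4 * ‖x‖ + a := by
    have := abs_le.1 ((abs_norm_sq_sub_norm_sq_le x y).trans hshift)
    exact abs_le.2 ⟨by linarith, by linarith⟩
  have hΓwz : |⟪ω, y⟫ ^ 2 + f - (‖x‖ ^ 2 + a) * directionalSq ω x| ≤
      ‖ω‖ ^ 2 * (4 + 4 * ‖x‖ + a) := by
    have := abs_le.1 ((abs_inner_sq_sub_inner_sq_le ω x y).trans
      (mul_le_mul_of_nonneg_left hshift hω2.le))
    rw [add_mul, norm_sq_mul_directionalSq]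
    exact abs_le.2 ⟨by linarith, by linarith⟩
  have hΓ : 1 / 4 ≤ ‖y‖ ^ 2 + e := by linarith [sq_nonneg ‖y‖]
  calc _ ≤ 34 * ((1 + (2 + 34) * ‖ω‖ ^ 2) * (4 + 4 * ‖x‖ + a)) / (‖x‖ ^ 2 + a) ^ 2 :=
        abs_inv_add_mul_sub_inv_mul_one_add_mul_le (by positivity) (by positivity) hzΓ
          (by positivity)
          (directionalSq_nonneg ω x) (directionalSq_le ω x)
          (Geps_nonneg hω2.le (by positivity)) (Geps_le_two hω2 hε hε5 hΓ)
          (Geps_nonneg hω2.le (by positivity)) hΓz hΓwz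
          ((mul_abs_Geps_sub_Geps_le hω2 hε (by linarith) (by norm_num) (by positivity)
            hzΓ).trans (by gcongr))
    _ = 34 * (1 + 36 * ‖ω‖ ^ 2) * ((4 + 4 * ‖x‖ + a) / (‖x‖ ^ 2 + a) ^ 2) := by ring
    _ ≤ 34 * (36 * (1 + ‖ω‖ ^ 2)) * (15 * bump 3 (√a)⁻¹ x) := by
        gcongr
        · linarith
        · exact displacement_div_sq_le_bump ha x
    _ = 18360 * (1 + ‖ω‖ ^ 2) * bump 3 (√a)⁻¹ x := by ring

lemma kernel_le_bump_of_tail (ω : ℂ) (hε : 0 < ε) (ha : 0 < a)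
    (htail : 1 ≤ 34 * (ε ^ 2 * (‖x‖ ^ 2 + a))) : kernel ω ε a x ≤ 35 * bump 4 ε x := by
  set s := ε ^ 2 * (‖x‖ ^ 2 + a) with hs
  have hs0 : 0 < s := by positivity
  calc kernel ω ε a x ≤ ((‖x‖ ^ 2 + a) * (1 + s))⁻¹ := kernel_le ω ε ha x
    _ = ε ^ 2 / (s * (1 + s)) := by rw [hs]; field_simp
    _ ≤ ε ^ 2 / ((1 + s) ^ 2 / 35) := by gcongr; nlinarith
    _ = 35 * (ε ^ 2 / (1 + s) ^ 2) := by field_simp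
    _ ≤ 35 * bump 4 ε x := by
      rw [bump_four_complex]
      gcongr
      exact mul_le_mul_of_nonneg_left (by linarith) (sq_nonneg ε)

lemma inv_le_bump_of_tail {Γ : ℝ} (hε : 0 < ε) (ha : 0 < a) (hΓ : ‖x‖ ^ 2 + a ≤ 34 * Γ)
    (htail : 1 ≤ 34 * (ε ^ 2 * (‖x‖ ^ 2 + a))) (hx : ε ^ 2 * ‖x‖ ^ 2 ≤ 10) :
    Γ⁻¹ ≤ 139876 * bump 4 ε x := by
  calc Γ⁻¹ ≤ ((‖x‖ ^ 2 + a) / 34)⁻¹ := by gcongr; linarith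
    _ ≤ (1 / (34 ^ 2 * ε ^ 2))⁻¹ := by
      refine inv_anti₀ (by positivity) ?_
      rw [div_le_div_iff₀ (by positivity) (by norm_num)]
      linarith
    _ = 139876 * (ε ^ 2 / (1 + 10) ^ 2) := by field_simp; norm_num
    _ ≤ 139876 * bump 4 ε x := by rw [bump_four_complex]; gcongr

lemma abs_inv_sub_kernel_le_bump_of_bulk (ω : ℂ) (ha : 0 < a)
    (hbulk : ε ^ 2 * (‖x‖ ^ 2 + a) ≤ 1) :
    |((‖x‖ ^ 2 + a) * (1 + directionalSq ω x * Geps (‖ω‖ ^ 2) ε (‖x‖ ^ 2 + a)))⁻¹ -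
      kernel ω ε a x| ≤ 4 * bump 4 ε x := by
  have hD := one_le_one_add_directionalSq_mul_Geps ω x ε (by positivity : 0 ≤ ‖x‖ ^ 2 + a)
  rw [kernel]
  set z := ‖x‖ ^ 2 + a
  set D := 1 + directionalSq ω x * Geps (‖ω‖ ^ 2) ε z
  have hz0 : 0 < z := by positivity
  have hdiff : (z * D)⁻¹ - (z * (1 + ε ^ 2 * z) * D)⁻¹ = ε ^ 2 / ((1 + ε ^ 2 * z) * D) := by
    field_simp
    ring
  rw [hdiff, abs_of_nonneg (by positivity), bump_four_complex]
  calc ε ^ 2 / ((1 + ε ^ 2 * z) * D) ≤ ε ^ 2 :=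
        div_le_self (sq_nonneg ε)
          (one_le_mul_of_one_le_of_one_le (le_add_of_nonneg_right (by positivity)) hD)
    _ = 4 * (ε ^ 2 / (1 + 1) ^ 2) := by ring
    _ ≤ 4 * (ε ^ 2 / (1 + ε ^ 2 * ‖x‖ ^ 2) ^ 2) := by
      gcongr
      exact (mul_le_mul_of_nonneg_left (le_add_of_nonneg_right ha.le) (sq_nonneg ε)).trans hbulk

lemma kernel_le_bump_of_le (ω : ℂ) (ε : ℝ) (ha : 0 < a) (hx : ‖x‖ ^ 2 + a ≤ 18 * a) :
    kernel ω ε a x ≤ 5 * bump 3 (√a)⁻¹ x := by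
  have hz : 0 < ‖x‖ ^ 2 + a := by positivity
  have hsqrt : √(‖x‖ ^ 2 + a) ≤ 5 * √a := by
    rw [Real.sqrt_le_left (by positivity), mul_pow, Real.sq_sqrt ha.le]
    linarith
  rw [bump_three_complex ha]
  calc kernel ω ε a x ≤ ((‖x‖ ^ 2 + a) * (1 + ε ^ 2 * (‖x‖ ^ 2 + a)))⁻¹ := kernel_le ω ε ha x
    _ ≤ (‖x‖ ^ 2 + a)⁻¹ :=
      inv_anti₀ hz (le_mul_of_one_le_right hz.le (le_add_of_nonneg_right (by positivity)))
    _ = √(‖x‖ ^ 2 + a) / ((‖x‖ ^ 2 + a) * √(‖x‖ ^ 2 + a)) := by field_simp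
    _ ≤ 5 * √a / ((‖x‖ ^ 2 + a) * √(‖x‖ ^ 2 + a)) := by gcongr
    _ = 5 * (√a / ((‖x‖ ^ 2 + a) * √(‖x‖ ^ 2 + a))) := mul_div_assoc _ _ _

lemma abs_inv_sub_kernel_le (hω : ω ≠ 0) (hε : 0 < ε) (hyx : ‖y - x‖ ≤ 2)
    (hx : ε ^ 2 * ‖x‖ ^ 2 ≤ 10) (ha : 1 / 2 ≤ a) (hae : a / 2 ≤ e) (hea : e ≤ a) (hf : 0 ≤ f)
    (hfa : f ≤ ‖ω‖ ^ 2 * a) :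
    |(‖y‖ ^ 2 + e + (⟪ω, y⟫ ^ 2 + f) * Geps (‖ω‖ ^ 2) ε (‖y‖ ^ 2 + e))⁻¹ - kernel ω ε a x| ≤
      140000 * (1 + ‖ω‖ ^ 2) * (bump 3 (√a)⁻¹ x + bump 4 ε x) := by
  have hb3 : 0 ≤ bump 3 (√a)⁻¹ x := bump_nonneg (by positivity) x
  have hb4 : 0 ≤ bump 4 ε x := bump_nonneg hε.le x
  have hω2 : 0 ≤ ‖ω‖ ^ 2 := sq_nonneg _
  obtain htail | hbulk := le_total 1 (34 * (ε ^ 2 * (‖x‖ ^ 2 + a)))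
  · have hΓ : 0 < ‖y‖ ^ 2 + e := add_pos_of_nonneg_of_pos (sq_nonneg _) (by linarith)
    have hg := Geps_nonneg (ε := ε) hω2 hΓ.le
    have hterm : (‖y‖ ^ 2 + e + (⟪ω, y⟫ ^ 2 + f) * Geps (‖ω‖ ^ 2) ε (‖y‖ ^ 2 + e))⁻¹ ≤
        139876 * bump 4 ε x :=
      (inv_anti₀ hΓ (le_add_of_nonneg_right (by positivity))).trans
        (inv_le_bump_of_tail hε (by linarith) (norm_sq_add_le_thirtyfour_mul hyx ha hae) htail hx)
    have hker := kernel_le_bump_of_tail ω hε (by linarith) htail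
    calc _ ≤ 139876 * bump 4 ε x + 35 * bump 4 ε x :=
          (abs_sub _ _).trans (add_le_add ((abs_of_nonneg (by positivity)).trans_le hterm)
            ((abs_of_nonneg (kernel_nonneg ω ε (by linarith) x)).trans_le hker))
      _ ≤ _ := by nlinarith [mul_nonneg hω2 hb3, mul_nonneg hω2 hb4]
  · have hε5 : ε ^ 2 ≤ 1 / 5 := by nlinarith [sq_nonneg ‖x‖, sq_nonneg ε]
    calc _ ≤ 18360 * (1 + ‖ω‖ ^ 2) * bump 3 (√a)⁻¹ x + 4 * bump 4 ε x :=
          (abs_sub_le _ _ _).trans (add_le_add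
            (abs_inv_sub_inv_le_bump hω hε hε5 hyx ha hae hea hf hfa)
            (abs_inv_sub_kernel_le_bump_of_bulk ω (by linarith) (by linarith)))
      _ ≤ _ := by nlinarith [mul_nonneg hω2 hb3, mul_nonneg hω2 hb4]

lemma kernel_le_bump (hε : 0 < ε) (ha : 0 < a)
    (h : 1 ≤ 34 * (ε ^ 2 * (‖x‖ ^ 2 + a)) ∨ ‖x‖ ^ 2 + a ≤ 18 * a) (ω : ℂ) :
    kernel ω ε a x ≤ 140000 * (1 + ‖ω‖ ^ 2) * (bump 3 (√a)⁻¹ x + bump 4 ε x) := by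
  have hb3 : 0 ≤ bump 3 (√a)⁻¹ x := bump_nonneg (by positivity) x
  have hb4 : 0 ≤ bump 4 ε x := bump_nonneg hε.le x
  have hbump : kernel ω ε a x ≤ 35 * (bump 3 (√a)⁻¹ x + bump 4 ε x) := by
    obtain htail | hcentre := h
    · linarith [kernel_le_bump_of_tail ω hε ha htail]
    · linarith [kernel_le_bump_of_le ω ε ha hcentre]
  exact hbump.trans (by gcongr; nlinarith [sq_nonneg ‖ω‖])

end Plane

end Comparison

section Lattice

open scoped Real RealInnerProductSpace

/-! ### The lattice sum -/

/-- The Euclidean plane, realised as `ℂ` so as to carry its norm, inner product, volume and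
polar coordinates. -/
def ofPlane (v : Fin 2 → ℝ) : ℂ := ⟨v 0, v 1⟩

/-- The embedding of the lattice `ℤ²` in the plane. -/
def ofLattice (l : ZLat 2) : ℂ := ofPlane fun i ↦ l i

lemma ofPlane_ne_zero {v : Fin 2 → ℝ} (hv : v ≠ 0) : ofPlane v ≠ 0 := fun h ↦ by
  rw [ofPlane, Complex.ext_iff] at h
  exact hv (funext (Fin.forall_fin_two.2 h))

lemma wnSq_eq_norm_sq (w : Fin 2 → ℝ) : wnSq w = ‖ofPlane w‖ ^ 2 := by
  rw [wnSq, Fin.sum_univ_two, ofPlane, ← Complex.normSq_eq_norm_sq, Complex.normSq_mk, sq, sq]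

lemma nsq_eq_norm_sq (l : ZLat 2) : nsq l = ‖ofLattice l‖ ^ 2 := wnSq_eq_norm_sq _

lemma dotw_eq_inner (w : Fin 2 → ℝ) (l : ZLat 2) : dotw w l = ⟪ofPlane w, ofLattice l⟫ := by
  simp [dotw, Fin.sum_univ_two, Complex.inner, ofLattice, ofPlane, mul_comm]

lemma ofLattice_sub (l m : ZLat 2) : ofLattice (l - m) = ofLattice l - ofLattice m := by
  simp [ofLattice, ofPlane, Complex.ext_iff]

lemma ofLattice_zero : ofLattice 0 = 0 := by simp [ofLattice, ofPlane, Complex.ext_iff]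

lemma one_le_nsq {d : ℕ} {l : ZLat d} (hl : l ≠ 0) : 1 ≤ nsq l := by
  obtain ⟨i, hi⟩ := Function.ne_iff.1 hl
  have hsq : (1 : ℝ) ≤ (l i : ℝ) ^ 2 := by
    exact_mod_cast Int.add_one_le_iff.2 (sq_pos_of_ne_zero hi)
  exact hsq.trans (Finset.single_le_sum (f := fun i ↦ (l i : ℝ) ^ 2) (fun i _ ↦ sq_nonneg _)
    (Finset.mem_univ i))

lemma nsq_nonneg {d : ℕ} (l : ZLat d) : 0 ≤ nsq l := Finset.sum_nonneg fun _ _ ↦ sq_nonneg _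

lemma mul_cutNorm_two_pos_iff {ε : ℝ} (hε : 0 < ε) (l : ZLat 2) :
    0 < ε * cutNorm 2 l ↔ l ≠ 0 := by
  rw [cutNorm, if_pos rfl, eN, mul_pos_iff_of_pos_left hε, Real.sqrt_pos]
  refine ⟨?_, fun hl ↦ one_pos.trans_le (one_le_nsq hl)⟩
  rintro h rfl
  simp [nsq] at h

lemma mul_cutNorm_two_le_one_iff {ε : ℝ} (hε : 0 < ε) (l : ZLat 2) :
    ε * cutNorm 2 l ≤ 1 ↔ ε ^ 2 * nsq l ≤ 1 := by
  rw [cutNorm, if_pos rfl, eN, ← sq_le_one_iff₀ (by positivity), mul_pow,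
    Real.sq_sqrt (nsq_nonneg l)]

lemma Jind_two {ε : ℝ} (hε : 0 < ε) (l m : ZLat 2) :
    Jind 2 ε l m = if l ≠ 0 ∧ ε ^ 2 * nsq l ≤ 1 ∧ m ≠ 0 ∧ ε ^ 2 * nsq m ≤ 1 ∧
      l + m ≠ 0 ∧ ε ^ 2 * nsq (l + m) ≤ 1 then 1 else 0 := by
  simp only [Jind, mul_cutNorm_two_pos_iff hε, mul_cutNorm_two_le_one_iff hε]

variable {n : ℕ}

/-- The summand of `P^ε` at `ℓ`, with `m = k₁ - ℓ` eliminated. -/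
def latticeTerm (w : Fin 2 → ℝ) (ε : ℝ) (k : Fin (n + 1) → ZLat 2) (l : ZLat 2) : ℝ :=
  Jind 2 ε l (k 0 - l) / (GammaT k l + GammaTw w k l * Geps (wnSq w) ε (GammaT k l))

lemma Peps_eq (w : Fin 2 → ℝ) (ε : ℝ) (k : Fin (n + 1) → ZLat 2) :
    Peps w ε k = lam 2 ε ^ 2 / π ^ 2 * ∑' l, latticeTerm w ε k l := rfl

/-- The point `k₁ / 2` about which the sum over `ℓ + m = k₁` is symmetric. -/
def centre (k : Fin (n + 1) → ZLat 2) : ℂ := (2⁻¹ : ℝ) • ofLattice (k 0)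

lemma norm_centre_sq (k : Fin (n + 1) → ZLat 2) : ‖centre k‖ ^ 2 = nsq (k 0) / 4 := by
  rw [centre, norm_smul, mul_pow, nsq_eq_norm_sq]
  norm_num
  ring

lemma inner_centre_sq (w : Fin 2 → ℝ) (k : Fin (n + 1) → ZLat 2) :
    ⟪ofPlane w, centre k⟫ ^ 2 = dotw w (k 0) ^ 2 / 4 := by
  rw [centre, real_inner_smul_right, dotw_eq_inner]
  ring

lemma GammaT_eq (k : Fin (n + 1) → ZLat 2) (l : ZLat 2) :
    GammaT k l = ‖ofLattice l - centre k‖ ^ 2 + (wSq k / 2 - ‖centre k‖ ^ 2) := by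
  rw [GammaT, wSq, Fin.sum_univ_succ, nsq_eq_norm_sq (k 0 - l), ofLattice_sub, norm_sub_sq_real,
    norm_sub_sq_real, norm_centre_sq, ← nsq_eq_norm_sq, ← nsq_eq_norm_sq, centre,
    real_inner_smul_right, real_inner_comm]
  ring

lemma GammaTw_eq (w : Fin 2 → ℝ) (k : Fin (n + 1) → ZLat 2) (l : ZLat 2) :
    GammaTw w k l = ⟪ofPlane w, ofLattice l - centre k⟫ ^ 2 +
      (wdotSq w k / 2 - ⟪ofPlane w, centre k⟫ ^ 2) := by
  rw [GammaTw, wdotSq, Fin.sum_univ_succ, dotw_eq_inner w (k 0 - l), ofLattice_sub, centre,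
    inner_sub_right, inner_sub_right, real_inner_smul_right, dotw_eq_inner, dotw_eq_inner]
  ring

lemma nsq_le_wSq (k : Fin (n + 1) → ZLat 2) : nsq (k 0) ≤ wSq k :=
  Finset.single_le_sum (f := fun i ↦ nsq (k i)) (fun _ _ ↦ nsq_nonneg _) (Finset.mem_univ 0)

lemma dotw_sq_le_wdotSq (w : Fin 2 → ℝ) (k : Fin (n + 1) → ZLat 2) :
    dotw w (k 0) ^ 2 ≤ wdotSq w k :=
  Finset.single_le_sum (f := fun i ↦ dotw w (k i) ^ 2) (fun _ _ ↦ sq_nonneg _)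
    (Finset.mem_univ 0)

lemma wdotSq_le (w : Fin 2 → ℝ) (k : Fin (n + 1) → ZLat 2) :
    wdotSq w k ≤ ‖ofPlane w‖ ^ 2 * wSq k := by
  rw [wdotSq, wSq, Finset.mul_sum]
  gcongr
  rw [dotw_eq_inner, nsq_eq_norm_sq]
  exact inner_sq_le_norm_sq_mul_norm_sq _ _

variable {w : Fin 2 → ℝ} {ε : ℝ} {k : Fin (n + 1) → ZLat 2} {l : ZLat 2} {x : ℂ}

lemma half_le_half_wSq (hk : k 0 ≠ 0) : 1 / 2 ≤ wSq k / 2 := by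
  linarith [one_le_nsq hk, nsq_le_wSq k]

lemma norm_sub_centre_sq (h : l = 0 ∨ l = k 0) :
    ‖ofLattice l - centre k‖ ^ 2 = ‖centre k‖ ^ 2 := by
  obtain rfl | rfl := h
  · rw [ofLattice_zero, zero_sub, norm_neg]
  · congr 2
    rw [centre]
    module

-- A vanishing summand lies beyond the cutoff or at `ℓ ∈ {0, k₁}`; there the kernel itself is no
-- larger than a bump.
lemma tail_or_centre_of_Jind_eq_zero (hε : 0 < ε) (hk : k 0 ≠ 0)
    (hlx : ‖ofLattice l - centre k - x‖ ≤ 2) (hJ : Jind 2 ε l (k 0 - l) = 0) :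
    1 ≤ 34 * (ε ^ 2 * (‖x‖ ^ 2 + wSq k / 2)) ∨ ‖x‖ ^ 2 + wSq k / 2 ≤ 18 * (wSq k / 2) := by
  have ha := half_le_half_wSq hk
  have hK := nsq_le_wSq k
  have hκ := norm_centre_sq k
  have hxy := norm_sq_le_two_mul_norm_sq_add hlx
  have hyx := norm_sq_le_two_mul_norm_sq_add (norm_sub_rev _ x ▸ hlx)
  have hΓ := GammaT_eq k l
  rw [GammaT] at hΓ
  have hS : 0 ≤ ∑ a : Fin n, nsq (k a.succ) := Finset.sum_nonneg fun _ _ ↦ nsq_nonneg _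
  rw [Jind_two hε, add_sub_cancel, ite_eq_right_iff] at hJ
  by_contra! ⟨hbulk, hfar⟩
  have hcut : ∀ m : ZLat 2, nsq m ≤ 34 * (‖x‖ ^ 2 + wSq k / 2) → ε ^ 2 * nsq m ≤ 1 :=
    fun m hm ↦ by nlinarith [mul_le_mul_of_nonneg_left hm (sq_nonneg ε)]
  have hne : ¬(l = 0 ∨ l = k 0) := fun h ↦ by linarith [norm_sub_centre_sq h]
  have hl := nsq_nonneg l
  have hm := nsq_nonneg (k 0 - l)
  have hk0 := nsq_nonneg (k 0)
  exact one_ne_zero (hJ ⟨fun h ↦ hne (.inl h), hcut _ (by linarith [sq_nonneg ‖x‖]),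
    fun h ↦ hne (.inr (sub_eq_zero.1 h).symm), hcut _ (by linarith [sq_nonneg ‖x‖]), hk,
    hcut _ (by linarith [sq_nonneg ‖x‖])⟩)

lemma Jind_eq_one_and_norm_sq_le_of_ne_zero (hε : 0 < ε) (hJ : Jind 2 ε l (k 0 - l) ≠ 0) :
    Jind 2 ε l (k 0 - l) = 1 ∧ ε ^ 2 * ‖ofLattice l - centre k‖ ^ 2 ≤ 1 := by
  rw [Jind_two hε, ne_eq, ite_eq_right_iff, Classical.not_imp] at hJ
  obtain ⟨hsupp, -⟩ := hJ
  refine ⟨by rw [Jind_two hε, if_pos hsupp], ?_⟩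
  obtain ⟨-, hl, -, hm, -⟩ := hsupp
  have hΓ := GammaT_eq k l
  rw [GammaT, wSq, Fin.sum_univ_succ, norm_centre_sq] at hΓ
  have hy : ‖ofLattice l - centre k‖ ^ 2 ≤ (nsq l + nsq (k 0 - l)) / 2 := by
    linarith [nsq_nonneg (k 0)]
  linarith [mul_le_mul_of_nonneg_left hy (sq_nonneg ε)]

lemma abs_latticeTerm_sub_kernel_le (hw : w ≠ 0) (hε : 0 < ε) (hε1 : ε < 1) (hk : k 0 ≠ 0)
    (hlx : ‖ofLattice l - centre k - x‖ ≤ 2) :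
    |latticeTerm w ε k l - kernel (ofPlane w) ε (wSq k / 2) x| ≤
      140000 * (1 + ‖ofPlane w‖ ^ 2) * (bump 3 (√(wSq k / 2))⁻¹ x + bump 4 ε x) := by
  have ha := half_le_half_wSq hk
  by_cases hJ : Jind 2 ε l (k 0 - l) = 0
  · rw [latticeTerm, hJ, zero_div, zero_sub, abs_neg,
      abs_of_nonneg (kernel_nonneg _ ε (by linarith) x)]
    exact kernel_le_bump hε (by linarith) (tail_or_centre_of_Jind_eq_zero hε hk hlx hJ) _
  · obtain ⟨hJ1, hy⟩ := Jind_eq_one_and_norm_sq_le_of_ne_zero hε hJ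
    have hx : ε ^ 2 * ‖x‖ ^ 2 ≤ 10 := by
      nlinarith [mul_le_mul_of_nonneg_left (norm_sq_le_two_mul_norm_sq_add hlx) (sq_nonneg ε)]
    have hκ := norm_centre_sq k
    have hK := nsq_le_wSq k
    have hκ' := inner_centre_sq w k
    have hw0 := dotw_sq_le_wdotSq w k
    rw [latticeTerm, hJ1, one_div, GammaT_eq, GammaTw_eq, wnSq_eq_norm_sq]
    exact abs_inv_sub_kernel_le (ofPlane_ne_zero hw) hε hlx hx ha (by linarith)
      (by linarith [nsq_nonneg (k 0)]) (by linarith [sq_nonneg (dotw w (k 0))])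
      (by linarith [wdotSq_le w k, sq_nonneg (dotw w (k 0))])

end Lattice

section RiemannSum

open MeasureTheory
open scoped Real

/-! ### The Riemann sum -/

/-- The corner of the lattice cell of a point of the plane; it turns lattice sums into
integrals over the plane. -/
def latticeFloor (u : ℂ) : ZLat 2 := fun i ↦ ⌊Complex.measurableEquivPi u i⌋

lemma measurePreserving_latticeFloor : MeasurePreserving latticeFloor volume Measure.count :=
  (measurePreserving_floor (Fin 2)).comp Complex.volume_preserving_equiv_pi

lemma norm_ofLattice_latticeFloor_sub_le (u : ℂ) : ‖ofLattice (latticeFloor u) - u‖ ≤ 2 := by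
  have hfloor : ∀ t : ℝ, |(⌊t⌋ : ℝ) - t| ≤ 1 := fun t ↦
    abs_le.2 ⟨by linarith [Int.lt_floor_add_one t], by linarith [Int.floor_le t]⟩
  calc ‖ofLattice (latticeFloor u) - u‖ ≤ |(⌊u.re⌋ : ℝ) - u.re| + |(⌊u.im⌋ : ℝ) - u.im| :=
        Complex.norm_le_abs_re_add_abs_im _
    _ ≤ 1 + 1 := add_le_add (hfloor _) (hfloor _)
    _ = 2 := one_add_one_eq_two

/-- The mass `∫ (1 + |x|²)^{-r/2}` shared by all the planar bumps of exponent `r`. -/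
def bumpMass (r : ℝ) : ℝ := ∫ x : ℂ, (1 + ‖x‖ ^ 2) ^ (-r / 2)

lemma bumpMass_nonneg (r : ℝ) : 0 ≤ bumpMass r := integral_nonneg fun x ↦ by positivity

variable {n : ℕ} {w : Fin 2 → ℝ} {ε : ℝ} {k : Fin (n + 1) → ZLat 2}

lemma abs_tsum_latticeTerm_sub_integral_kernel_le (hw : w ≠ 0) (hε : 0 < ε) (hε1 : ε < 1)
    (hk : k 0 ≠ 0) :
    |∑' l, latticeTerm w ε k l - ∫ x, kernel (ofPlane w) ε (wSq k / 2) x| ≤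
      140000 * (1 + ‖ofPlane w‖ ^ 2) * (bumpMass 3 + bumpMass 4) := by
  have ha : 0 < wSq k / 2 := by linarith [half_le_half_wSq hk]
  have hδ : 0 < (√(wSq k / 2))⁻¹ := by positivity
  have hb3 : Integrable (bump (E := ℂ) 3 (√(wSq k / 2))⁻¹) := integrable_bump (by norm_num) hδ
  have hb4 : Integrable (bump (E := ℂ) 4 ε) := integrable_bump (by norm_num) hε
  have hE := (hb3.add hb4).const_mul (140000 * (1 + ‖ofPlane w‖ ^ 2))
  have hRiemann := abs_tsum_sub_integral_le measurePreserving_latticeFloor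
    ((integrable_kernel (ofPlane w) hε ha).comp_sub_right (centre k))
    (hE.comp_sub_right (centre k)) (φ := latticeTerm w ε k) fun u ↦
      abs_latticeTerm_sub_kernel_le hw hε hε1 hk (by
        rw [sub_sub_sub_cancel_right]
        exact norm_ofLattice_latticeFloor_sub_le u)
  simp only [Pi.add_apply] at hRiemann
  rwa [integral_sub_right_eq_self (kernel (ofPlane w) ε (wSq k / 2)),
    integral_sub_right_eq_self (fun x ↦ 140000 * (1 + ‖ofPlane w‖ ^ 2) *
      (bump 3 (√(wSq k / 2))⁻¹ x + bump 4 ε x)),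
    integral_const_mul, integral_add hb3 hb4, integral_bump 3 hδ, integral_bump 4 hε] at hRiemann

theorem stmt3_general (w : Fin 2 → ℝ) (hw : w ≠ 0) :
    ∃ C : ℝ, 0 < C ∧ ∀ ε : ℝ, 0 < ε → ε < 1 →
      ∀ (n : ℕ) (k : Fin (n + 1) → ZLat 2), k 0 ≠ 0 →
        |Peps w ε k - Gfun (wnSq w) (Leps ε (wSq k / 2))| ≤ C * lam 2 ε ^ 2 := by
  set M := 140000 * (1 + ‖ofPlane w‖ ^ 2) * (bumpMass 3 + bumpMass 4)
  have hM : 0 ≤ M := by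
    have := add_nonneg (bumpMass_nonneg 3) (bumpMass_nonneg 4)
    positivity
  refine ⟨M + 1, by positivity, fun ε hε hε1 n k hk ↦ ?_⟩
  have ha : 0 < wSq k / 2 := by linarith [half_le_half_wSq hk]
  have hlam := lam_two_sq_pos hε hε1
  have hG : Gfun (wnSq w) (Leps ε (wSq k / 2)) =
      lam 2 ε ^ 2 / π ^ 2 * ∫ x, kernel (ofPlane w) ε (wSq k / 2) x := by
    rw [integral_kernel (ofPlane_ne_zero hw) hε hε1 ha, ← mul_assoc, div_mul_div_cancel₀',
      div_self (by positivity), one_mul, Geps, wnSq_eq_norm_sq]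
    exact hlam.ne'
  calc |Peps w ε k - Gfun (wnSq w) (Leps ε (wSq k / 2))|
      = lam 2 ε ^ 2 / π ^ 2 *
          |∑' l, latticeTerm w ε k l - ∫ x, kernel (ofPlane w) ε (wSq k / 2) x| := by
        rw [hG, Peps_eq, ← mul_sub, abs_mul, abs_of_nonneg (by positivity)]
    _ ≤ lam 2 ε ^ 2 * M := by
        gcongr
        · exact div_le_self hlam.le (one_le_pow₀ (by linarith [Real.pi_gt_three]))
        · exact abs_tsum_latticeTerm_sub_integral_kernel_le hw hε hε1 hk
    _ ≤ (M + 1) * lam 2 ε ^ 2 := by linarith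

end RiemannSum

/-- There is a constant `C > 0`, independent of `ε`, `n` (and `k`),
such that for every `ε ∈ (0,1/2)`, `n ≥ 1` and every `k_{1:n} ∈ (ℤ²₀)^n` (chaos level
`n+1 ≥ 1` here), `|P^ε(k_{1:n}) − G(L^ε(|k_{1:n}|²/2))| ≤ C λ_ε²`. -/
theorem stmt3 (w : Fin 2 → ℝ) (hw : w ≠ 0) :
    ∃ C : ℝ, 0 < C ∧
      ∀ ε : ℝ, 0 < ε → ε < 1/2 →
      ∀ (n : ℕ) (k : Fin (n+1) → ZLat 2), (∀ a, k a ≠ 0) →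
        |Peps w ε k - Gfun (wnSq w) (Leps ε (wSq k / 2))| ≤ C * (lam 2 ε)^2 := by
  obtain ⟨C, hC, hbound⟩ := stmt3_general w hw
  exact ⟨C, hC, fun ε hε hε2 n k hk ↦ hbound ε hε (by linarith) n k (hk 0)⟩

end SBE
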